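/- Let G be a connected graph and H : V(G) → 2^ℕ a function such that for every vertex v and every natural number i, if i ∉ H(v) then i+1 ∈ H(v) (i.e., (G,H) is dense). Then for any fixed vertex u ∈ V(G), there exists an orientation O of G such that d⁺_O(v) ∈ H(v) for every vertex v ≠ u. -/

import Mathlib

/-- An orientation of a graph: each edge is assigned a source endpoint. -/
structure GOrientation {V : Type*} (G : SimpleGraph V) where
  src : Sym2 V → V
  mem : ∀ e ∈ G.edgeSet, src e ∈ e

/-- Out-degree of `v` under orientation `O`: number of edges whose source is `v`. -/
noncomputable def outDeg {V : Type*} {G : SimpleGraph V} (O : GOrientation G) (v : V) : ℕ :=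
  Set.ncard {e ∈ G.edgeSet | O.src e = v}

/-- Degree of a vertex. -/
noncomputable def deg {V : Type*} (G : SimpleGraph V) (v : V) : ℕ :=
  (G.neighborSet v).ncard

/-- The pair `(G, H)` is dense: `G` is connected and `i ∉ H v → i+1 ∈ H v`. -/
def DensePair {V : Type*} (G : SimpleGraph V) (H : V → Set ℕ) : Prop :=
  G.Connected ∧ ∀ v : V, ∀ i : ℕ, i ∉ H v → i + 1 ∈ H v

/-- `D⁺_{G,H}(u)`: possible out-degrees of `u` over orientations feasible away from `u`. -/
noncomputable def Dset {V : Type*} (G : SimpleGraph V) (H : V → Set ℕ) (u : V) : Set ℕ :=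
  {d | ∃ O : GOrientation G, (∀ x, x ≠ u → outDeg O x ∈ H x) ∧ outDeg O u = d}

/-- `x` is a cut vertex: `G` is connected but `G - x` is not. -/
def IsCutVertex {V : Type*} (G : SimpleGraph V) (x : V) : Prop :=
  G.Connected ∧ ¬ (G.induce ({x}ᶜ : Set V)).Connected

/-!
Reversing one edge `vw` changes the out-degree of `v` by exactly one, and no out-degree other than
those of `v` and `w`. As two consecutive integers never both miss `H v`, such a reversal repairs
`v`. Treating the vertices of a finite set in order of decreasing distance to `u`, and always
reversing an edge towards `u`, never disturbs a vertex treated before. For infinite graphs, the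
orientations obtained for the finite sets of vertices converge along an ultrafilter.
-/

namespace GOrientation

variable {V : Type*} {G : SimpleGraph V}

instance : Nonempty (GOrientation G) :=
  ⟨⟨fun e => e.out.1, fun e _ => e.out_fst_mem⟩⟩

open Classical in
/-- The orientation obtained from `O` by making the endpoint `x` of `e` the source of `e`, whether
or not it was before. All edge reversals are expressed through it. -/
noncomputable def setSrc (O : GOrientation G) {e : Sym2 V} {x : V} (hx : x ∈ e) :
    GOrientation G where
  src := Function.update O.src e x
  mem e' he' := by
    by_cases h : e' = e
    · subst h
      simpa using hx
    · simpa [h] using O.mem e' he'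

@[simp]
lemma setSrc_src_self (O : GOrientation G) {e : Sym2 V} {x : V} (hx : x ∈ e) :
    (O.setSrc hx).src e = x := by
  simp [setSrc]

@[simp]
lemma setSrc_src_of_ne (O : GOrientation G) {e e' : Sym2 V} {x : V} (hx : x ∈ e) (h : e' ≠ e) :
    (O.setSrc hx).src e' = O.src e' := by
  simp [setSrc, h]

lemma outDeg_congr {O O' : GOrientation G} {v : V}
    (h : ∀ e ∈ G.incidenceSet v, O.src e = O'.src e) : outDeg O v = outDeg O' v := by
  have source_iff : ∀ e ∈ G.edgeSet, (O.src e = v ↔ O'.src e = v) := fun e he =>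
    ⟨fun hv => (h e ⟨he, hv ▸ O.mem e he⟩).symm.trans hv,
      fun hv => (h e ⟨he, hv ▸ O'.mem e he⟩).trans hv⟩
  exact congrArg Set.ncard (Set.ext fun e => and_congr_right (source_iff e))

lemma outDeg_setSrc_of_notMem (O : GOrientation G) {e : Sym2 V} {x v : V} (hx : x ∈ e)
    (hv : v ∉ e) : outDeg (O.setSrc hx) v = outDeg O v :=
  outDeg_congr fun _ he' => O.setSrc_src_of_ne hx fun h => hv (h ▸ he'.2)

lemma outDeg_setSrc_self (O : GOrientation G) {e : Sym2 V} {v : V} (he : e ∈ G.edgeSet)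
    (hv : v ∈ e) (hfin : (G.incidenceSet v).Finite) (hsrc : O.src e ≠ v) :
    outDeg (O.setSrc hv) v = outDeg O v + 1 := by
  have outEdges_eq_insert : {e' ∈ G.edgeSet | (O.setSrc hv).src e' = v} =
      insert e {e' ∈ G.edgeSet | O.src e' = v} := by
    ext e'
    by_cases h : e' = e
    · simp [h, he]
    · simp [h]
  have outEdges_finite : {e' ∈ G.edgeSet | O.src e' = v}.Finite :=
    hfin.subset fun e' he' => ⟨he'.1, he'.2 ▸ O.mem e' he'.1⟩
  rw [outDeg, outEdges_eq_insert, Set.ncard_insert_of_notMem (fun h => hsrc h.2) outEdges_finite,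
    outDeg]

lemma outDeg_setSrc_add_one (O : GOrientation G) {e : Sym2 V} {x v : V} (he : e ∈ G.edgeSet)
    (hx : x ∈ e) (hfin : (G.incidenceSet v).Finite) (hsrc : O.src e = v) (hxv : x ≠ v) :
    outDeg (O.setSrc hx) v + 1 = outDeg O v := by
  have hv : v ∈ e := hsrc ▸ O.mem e he
  rw [← (O.setSrc hx).outDeg_setSrc_self he hv hfin (by simpa using hxv)]
  refine outDeg_congr fun e' _ => ?_
  by_cases h : e' = e
  · simp [h, hsrc]
  · simp [h]

lemma exists_outDeg_mem_of_adj (O : GOrientation G) {v w : V} (hvw : G.Adj v w)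
    (hfin : (G.incidenceSet v).Finite) {S : Set ℕ} (hS : ∀ i, i ∉ S → i + 1 ∈ S) :
    ∃ O' : GOrientation G, outDeg O' v ∈ S ∧
      ∀ x, x ≠ v → x ≠ w → outDeg O' x = outDeg O x := by
  by_cases hO : outDeg O v ∈ S
  · exact ⟨O, hO, fun _ _ _ => rfl⟩
  have hv : v ∈ s(v, w) := Sym2.mem_mk_left v w
  have hw : w ∈ s(v, w) := Sym2.mem_mk_right v w
  by_cases hsrc : O.src s(v, w) = v
  · refine ⟨O.setSrc hw, ?_, fun x hxv hxw => O.outDeg_setSrc_of_notMem hw (by simp [hxv, hxw])⟩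
    by_contra hO'
    exact hO (O.outDeg_setSrc_add_one hvw hw hfin hsrc hvw.ne' ▸ hS _ hO')
  · refine ⟨O.setSrc hv, ?_, fun x hxv hxw => O.outDeg_setSrc_of_notMem hv (by simp [hxv, hxw])⟩
    exact O.outDeg_setSrc_self hvw hv hfin hsrc ▸ hS _ hO

variable {H : V → Set ℕ}

lemma exists_forall_outDeg_mem_of_exists_adj_lt {α : Type*} [LinearOrder α] (f : V → α)
    (F : Finset V) (hf : ∀ v ∈ F, ∃ w, G.Adj v w ∧ f w < f v)
    (hfin : ∀ v ∈ F, (G.incidenceSet v).Finite) (hH : ∀ v ∈ F, ∀ i, i ∉ H v → i + 1 ∈ H v) :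
    ∃ O : GOrientation G, ∀ v ∈ F, outDeg O v ∈ H v := by
  classical
  induction F using Finset.induction_on_min_value f with
  | empty => simp
  | insert v F hvF hmin ih =>
    rw [Finset.forall_mem_insert] at hf hfin hH
    obtain ⟨O, hO⟩ := ih hf.2 hfin.2 hH.2
    obtain ⟨w, hvw, hlt⟩ := hf.1
    have hwF : w ∉ F := fun hw => (hmin w hw).not_gt hlt
    obtain ⟨O', hv, hother⟩ := O.exists_outDeg_mem_of_adj hvw hfin.1 hH.1
    refine ⟨O', Finset.forall_mem_insert _ _ _ |>.2 ⟨hv, fun x hx => ?_⟩⟩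
    rw [hother x (ne_of_mem_of_not_mem hx hvF) (ne_of_mem_of_not_mem hx hwF)]
    exact hO x hx

lemma exists_forall_eventually_src_eq {ι : Type*} (U : Ultrafilter ι) (O : ι → GOrientation G) :
    ∃ O' : GOrientation G, ∀ e ∈ G.edgeSet, ∀ᶠ i in U, (O i).src e = O'.src e := by
  classical
  have exists_limit : ∀ e : Sym2 V, ∃ x,
      e ∈ G.edgeSet → x ∈ e ∧ ∀ᶠ i in U, (O i).src e = x := by
    intro e
    by_cases he : e ∈ G.edgeSet
    · have endpoints_finite : {x | x ∈ e}.Finite :=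
        e.toFinset.finite_toSet.subset fun x => by simp
      have hsrc : ∀ᶠ i in U, ∃ x ∈ {x | x ∈ e}, (O i).src e = x :=
        .of_forall fun i => ⟨_, (O i).mem e he, rfl⟩
      obtain ⟨x, hx⟩ := (Ultrafilter.eventually_exists_mem_iff endpoints_finite).1 hsrc
      exact ⟨x, fun _ => hx⟩
    · exact ⟨e.out.1, fun h => absurd h he⟩
  choose src hsrc using exists_limit
  exact ⟨⟨src, fun e he => (hsrc e he).1⟩, fun e he => (hsrc e he).2⟩

lemma exists_forall_outDeg_mem_of_forall_finset {S : Set V}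
    (hfin : ∀ v ∈ S, (G.incidenceSet v).Finite)
    (h : ∀ F : Finset V, ↑F ⊆ S → ∃ O : GOrientation G, ∀ v ∈ F, outDeg O v ∈ H v) :
    ∃ O : GOrientation G, ∀ v ∈ S, outDeg O v ∈ H v := by
  classical
  have exists_on_inter : ∀ F : Finset V, ∃ O : GOrientation G,
      ∀ v ∈ F, v ∈ S → outDeg O v ∈ H v := by
    intro F
    obtain ⟨O, hO⟩ := h {v ∈ F | v ∈ S} fun v hv => (Finset.mem_filter.1 hv).2
    exact ⟨O, fun v hvF hvS => hO v (Finset.mem_filter.2 ⟨hvF, hvS⟩)⟩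
  choose O hO using exists_on_inter
  let U : Ultrafilter (Finset V) := .of Filter.atTop
  obtain ⟨O', hO'⟩ := exists_forall_eventually_src_eq U O
  refine ⟨O', fun v hv => ?_⟩
  have eventually_mem : ∀ᶠ F : Finset V in U, v ∈ F :=
    ((Filter.eventually_ge_atTop {v}).filter_mono (Ultrafilter.of_le _)).mono
      fun _ => Finset.singleton_subset_iff.1
  have eventually_agree : ∀ᶠ F in U, ∀ e ∈ G.incidenceSet v, (O F).src e = O'.src e :=
    (Filter.eventually_all_finite (hfin v hv)).2 fun e he => hO' e he.1
  obtain ⟨F, hvF, hagree⟩ := (eventually_mem.and eventually_agree).exists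
  exact outDeg_congr hagree ▸ hO F v hvF hv

end GOrientation

lemma exists_adj_dist_lt_of_reachable {V : Type*} {G : SimpleGraph V} {u v : V}
    (h : G.Reachable v u) (hne : v ≠ u) : ∃ w, G.Adj v w ∧ G.dist w u < G.dist v u := by
  obtain ⟨p, hp⟩ := h.exists_walk_length_eq_dist
  cases p with
  | nil => exact absurd rfl hne
  | @cons _ w _ hvw q =>
    refine ⟨w, hvw, ?_⟩
    calc G.dist w u ≤ q.length := SimpleGraph.dist_le q
      _ < q.length + 1 := Nat.lt_succ_self _
      _ = G.dist v u := hp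

theorem stmt1_general {V : Type*} (G : SimpleGraph V) (H : V → Set ℕ) (hd : DensePair G H) (u : V)
    (hfin : ∀ v, v ≠ u → (G.neighborSet v).Finite) :
    ∃ O : GOrientation G, ∀ v, v ≠ u → outDeg O v ∈ H v := by
  classical
  have incidenceSet_finite : ∀ v, v ≠ u → (G.incidenceSet v).Finite := fun v hv =>
    (G.incidenceSetEquivNeighborSet v).set_finite_iff.2 (hfin v hv)
  exact GOrientation.exists_forall_outDeg_mem_of_forall_finset (S := {u}ᶜ) incidenceSet_finite
    fun F hF => GOrientation.exists_forall_outDeg_mem_of_exists_adj_lt (G.dist · u) F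
      (fun v hv => exists_adj_dist_lt_of_reachable (hd.1 v u) (hF hv))
      (fun v hv => incidenceSet_finite v (hF hv)) fun v _ => hd.2 v

theorem stmt1 {V : Type*} [Fintype V] (G : SimpleGraph V) (H : V → Set ℕ)
    (hd : DensePair G H) (u : V) :
    ∃ O : GOrientation G, ∀ v, v ≠ u → outDeg O v ∈ H v :=
  stmt1_general G H hd u fun _ _ => Set.toFinite _
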